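/- For every n ∈ ℕ, the transformation T_n together with the maps T_n(f) and the supports supp^{T_n} is a normal PO-dilator, and likewise T_{n+1}^- together with the maps T_{n+1}^-(f) and the supports supp^{T_{n+1}^-} is a normal PO-dilator. -/

import Mathlib

universe u

/-- Terms for labelled trees: leaves carry labels from `X`, inner nodes carry
natural number labels and a (multi)set of immediate subtrees, represented as a list. -/
inductive TTerm (X : Type u) : Type u
  | leaf : X → TTerm X
  | node : ℕ → List (TTerm X) → TTerm X

namespace TTerm

/-- All node labels are `< n`. -/
inductive Bdd (n : ℕ) {X : Type u} : TTerm X → Prop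
  | leaf (x : X) : Bdd n (leaf x)
  | node {i : ℕ} {l : List (TTerm X)} : i < n → (∀ t ∈ l, Bdd n t) → Bdd n (node i l)

/-- The term is a leaf or has root label `0`. -/
def IsMinus {X : Type u} : TTerm X → Prop
  | leaf _ => True
  | node i _ => i = 0

/-- The recursively defined gap order `≤_{T_n(X)}`, relative to a relation `r`
on the leaf labels.  Lists of subtrees are compared as multisets: via an
injection that relates corresponding entries. -/
inductive TLE {X : Type u} (r : X → X → Prop) : TTerm X → TTerm X → Prop
  | leaf {x y : X} : r x y → TLE r (leaf x) (leaf y)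
  | leaf_sub {x : X} {j : ℕ} {l : List (TTerm X)} {t : TTerm X} :
      t ∈ l → TLE r (leaf x) t → TLE r (leaf x) (node j l)
  | node {i : ℕ} {l l' : List (TTerm X)} (g : Fin l.length → Fin l'.length) :
      Function.Injective g → (∀ k, TLE r (l.get k) (l'.get (g k))) →
      TLE r (node i l) (node i l')
  | node_sub {i j : ℕ} {σ : List (TTerm X)} {l : List (TTerm X)} {t : TTerm X} :
      i ≤ j → t ∈ l → TLE r (node i σ) t → TLE r (node i σ) (node j l)

/-- Equality of terms as labelled trees with multisets of subtrees, relative to a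
relation `e` identifying leaf labels. -/
inductive TEquiv {X : Type u} (e : X → X → Prop) : TTerm X → TTerm X → Prop
  | leaf {x y : X} : e x y → TEquiv e (leaf x) (leaf y)
  | node {i : ℕ} {l l' : List (TTerm X)} (g : Fin l.length → Fin l'.length) :
      Function.Bijective g → (∀ k, TEquiv e (l.get k) (l'.get (g k))) →
      TEquiv e (node i l) (node i l')

/-- The height of a term. -/
def height {X : Type u} : TTerm X → ℕ
  | leaf _ => 0
  | node _ l => (l.attach.map (fun t => height t.1)).foldr (fun a b => max (a + 1) b) 0
decreasing_by
  have := List.sizeOf_lt_of_mem t.2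
  simp only [TTerm.node.sizeOf_spec]
  omega

/-- The support of a term: the set of its leaf labels. -/
def suppT {X : Type u} : TTerm X → Set X
  | leaf x => {x}
  | node _ l => (l.attach.map (fun t => suppT t.1)).foldr (· ∪ ·) ∅
decreasing_by
  have := List.sizeOf_lt_of_mem t.2
  simp only [TTerm.node.sizeOf_spec]
  omega

/-- The action of `T_n` on maps. -/
def tmap {X Y : Type u} (f : X → Y) : TTerm X → TTerm Y
  | leaf x => leaf (f x)
  | node i l => node i (l.attach.map (fun t => tmap f t.1))
decreasing_by
  have := List.sizeOf_lt_of_mem t.2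
  simp only [TTerm.node.sizeOf_spec]
  omega

end TTerm

open TTerm

/-- A quasi embedding of partial orders. -/
def QuasiEmb {X Y : Type*} [PartialOrder X] [PartialOrder Y] (f : X → Y) : Prop :=
  ∀ x y : X, f x ≤ f y → x ≤ y

/-- An embedding of partial orders. -/
def IsEmb {X Y : Type*} [PartialOrder X] [PartialOrder Y] (f : X → Y) : Prop :=
  ∀ x y : X, x ≤ y ↔ f x ≤ f y

/-- The relation `a ≤ᶠⁱⁿ b` on subsets of a partial order. -/
def LeFin {X : Type*} [PartialOrder X] (a b : Set X) : Prop :=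
  ∀ x ∈ a, ∃ y ∈ b, x ≤ y

/-- `T_n(X)`: tree terms with labels bounded by `n`. -/
def Tn (n : ℕ) (X : Type u) : Type u := {t : TTerm X // TTerm.Bdd n t}

/-- `T_n(X)` with terms representing the same labelled tree identified. -/
def TnQ (n : ℕ) (X : Type u) : Type u :=
  Quot (fun a b : Tn n X => TEquiv Eq a.1 b.1)

/-- The gap order on `T_n(X)`. -/
def TnQLE (n : ℕ) (X : Type u) [PartialOrder X] : TnQ n X → TnQ n X → Prop :=
  fun a b => ∃ s t : Tn n X, a = Quot.mk _ s ∧ b = Quot.mk _ t ∧ TLE (· ≤ ·) s.1 t.1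

/-- `T_n^-(X)`: bounded tree terms that are leaves or have root label `0`. -/
def TnM (n : ℕ) (X : Type u) : Type u :=
  {t : TTerm X // TTerm.Bdd n t ∧ TTerm.IsMinus t}

/-- `T_n^-(X)` with terms representing the same labelled tree identified. -/
def TnMQ (n : ℕ) (X : Type u) : Type u :=
  Quot (fun a b : TnM n X => TEquiv Eq a.1 b.1)

/-- The gap order on `T_n^-(X)`. -/
def TnMQLE (n : ℕ) (X : Type u) [PartialOrder X] : TnMQ n X → TnMQ n X → Prop :=
  fun a b => ∃ s t : TnM n X, a = Quot.mk _ s ∧ b = Quot.mk _ t ∧ TLE (· ≤ ·) s.1 t.1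

/-!
Membership in `T_n(X)` and in `T_{n+1}^-(X)` depends only on the inner labels of a term, so both are
instances of one result about a class of terms that is invariant under relabelling the leaves.

Pulling the gap order over `r` back along `tmap f` gives the gap order over the pullback of `r`
along `f`. Since the gap order is monotone in the relation on leaf labels, quasi embeddings and
embeddings are preserved.

For antisymmetry, let `s` and `t` be below each other. The gap order respects heights, so neither
term is below a proper subterm of the other, and the subtrees of `s` and those of `t` are matched
by injections in both directions. Their composite permutes the finitely many subtrees of `s` and
maps each to a larger one. Going around a cycle shows that subtrees matched with each other are
equivalent, and induction identifies them.
-/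

theorem rel_apply_self_of_injective {ι α : Type*} [Finite ι] {R : α → α → Prop} [IsPreorder α R]
    {u : ι → α} {φ : ι → ι} (hφ : Function.Injective φ)
    (h : ∀ k, R (u k) (u (φ k))) (k : ι) : R (u (φ k)) (u k) := by
  have rel_iterate (m : ℕ) (k : ι) : R (u k) (u (φ^[m] k)) := by
    induction m generalizing k with
    | zero => exact refl _
    | succ m ih => exact _root_.trans (h k) (ih (φ k))
  obtain ⟨m, hm, hk⟩ := hφ.mem_periodicPts k
  have hk' : φ^[m - 1] (φ k) = k := by
    rwa [← Function.iterate_succ_apply, Nat.succ_eq_add_one, Nat.sub_add_cancel hm]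
  simpa only [hk'] using rel_iterate (m - 1) (φ k)

theorem isPartialOrder_quot_of_iff_antisymmRel {α : Type*} {R e : α → α → Prop}
    [IsPreorder α R] (he : ∀ a b, e a b ↔ AntisymmRel R a b) :
    IsPartialOrder (Quot e) fun p q => ∃ a b, p = Quot.mk e a ∧ q = Quot.mk e b ∧ R a b := by
  obtain rfl : e = AntisymmRel R := by ext; exact he _ _
  have antisymmRel_of_mk_eq {a b : α} (h : Quot.mk (AntisymmRel R) a = Quot.mk _ b) :
      AntisymmRel R a b :=
    (AntisymmRel.setoid α R).iseqv.eqvGen_iff.1 (Quot.eqvGen_exact h)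
  refine { refl := ?_, trans := ?_, antisymm := ?_ }
  · rintro ⟨a⟩
    exact ⟨a, a, rfl, rfl, refl a⟩
  · rintro _ _ _ ⟨a, b, rfl, rfl, hab⟩ ⟨b', c, hb, rfl, hbc⟩
    exact ⟨a, c, rfl, rfl, _root_.trans (_root_.trans hab (antisymmRel_of_mk_eq hb).1) hbc⟩
  · rintro _ _ ⟨a, b, rfl, rfl, hab⟩ ⟨b', a', hb, ha, hba⟩
    exact Quot.sound ⟨hab, _root_.trans (_root_.trans (antisymmRel_of_mk_eq hb).1 hba)
      (antisymmRel_of_mk_eq ha).2⟩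

/-- The comparison of finite multisets with respect to `R`, the multisets being represented by
lists: an injection sends each entry of `l` to an `R`-larger entry of `l'`. For `R = TLE r` this is
the order on `M(T_n(X))` that occurs in the recursive clause for the gap order. -/
def MultisetLE {α β : Type*} (R : α → β → Prop) (l : List α) (l' : List β) : Prop :=
  ∃ g : Fin l.length → Fin l'.length, Function.Injective g ∧ ∀ k, R (l.get k) (l'.get (g k))

namespace MultisetLE

variable {α β γ δ : Type*}

theorem congr_of_mem {R S : α → β → Prop} {l : List α} {l' : List β}
    (h : ∀ a ∈ l, ∀ b ∈ l', R a b ↔ S a b) : MultisetLE R l l' ↔ MultisetLE S l l' :=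
  exists_congr fun _ => and_congr_right fun _ => forall_congr' fun _ =>
    h _ (List.get_mem _ _) _ (List.get_mem _ _)

theorem map_iff {R : γ → δ → Prop} {φ : α → γ} {ψ : β → δ} {l : List α} {l' : List β} :
    MultisetLE R (l.map φ) (l'.map ψ) ↔ MultisetLE (fun a b => R (φ a) (ψ b)) l l' := by
  let c := finCongr (l.length_map (f := φ))
  let c' := finCongr (l'.length_map (f := ψ))
  refine (Equiv.arrowCongr c c').exists_congr fun g => and_congr ?_ (c.forall_congr fun k => ?_)
  · simp [Equiv.arrowCongr]
  · simp [c, c']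

theorem exists_bijective_antisymmRel {R : α → α → Prop} [IsPreorder α R]
    {l l' : List α} (h : MultisetLE R l l') (h' : MultisetLE R l' l) :
    ∃ g : Fin l.length → Fin l'.length,
      Function.Bijective g ∧ ∀ k, AntisymmRel R (l.get k) (l'.get (g k)) := by
  obtain ⟨g, g_inj, hg⟩ := h
  obtain ⟨g', g'_inj, hg'⟩ := h'
  have length_eq : l.length = l'.length := le_antisymm
    (Fin.le_of_injective g g_inj) (Fin.le_of_injective g' g'_inj)
  refine ⟨g, g_inj.bijective_of_nat_card_le (by simp [length_eq]), fun k => ⟨hg k, ?_⟩⟩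
  have le_comp (k) : R (l.get k) (l.get ((g' ∘ g) k)) := _root_.trans (hg k) (hg' (g k))
  exact _root_.trans (hg' (g k)) (rel_apply_self_of_injective (g'_inj.comp g_inj) le_comp k)

end MultisetLE

namespace TTerm

variable {X Y Z : Type u}

@[elab_as_elim, induction_eliminator]
theorem induction {motive : TTerm X → Prop} (leaf : ∀ x, motive (leaf x))
    (node : ∀ i l, (∀ t ∈ l, motive t) → motive (node i l)) : ∀ t, motive t
  | .leaf x => leaf x
  | .node i l => node i l fun t _ => induction leaf node t

@[simp]
theorem tmap_leaf (f : X → Y) (x : X) : tmap f (leaf x) = leaf (f x) := by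
  rw [tmap]

@[simp]
theorem tmap_node (f : X → Y) (i : ℕ) (l : List (TTerm X)) :
    tmap f (node i l) = node i (l.map (tmap f)) := by
  rw [tmap, List.attach_map_val]

theorem tmap_id (t : TTerm X) : tmap id t = t := by
  induction t with
  | leaf x => rw [tmap_leaf, id]
  | node i l ih => rw [tmap_node, List.map_congr_left ih, List.map_id']

theorem tmap_comp (f : X → Y) (g : Y → Z) (t : TTerm X) :
    tmap (g ∘ f) t = tmap g (tmap f t) := by
  induction t with
  | leaf x => simp only [tmap_leaf, Function.comp_apply]
  | node i l ih =>
    simp only [tmap_node, List.map_map]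
    rw [List.map_congr_left ih]
    rfl

theorem bdd_node {n i : ℕ} {l : List (TTerm X)} :
    Bdd n (node i l) ↔ i < n ∧ ∀ t ∈ l, Bdd n t :=
  ⟨fun | .node hi hl => ⟨hi, hl⟩, fun h => .node h.1 h.2⟩

theorem bdd_tmap {n : ℕ} (f : X → Y) (t : TTerm X) : Bdd n (tmap f t) ↔ Bdd n t := by
  induction t with
  | leaf x => simp only [tmap_leaf, Bdd.leaf]
  | node i l ih =>
    rw [tmap_node, bdd_node, bdd_node, List.forall_mem_map]
    exact and_congr_right fun _ => forall₂_congr ih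

theorem isMinus_tmap (f : X → Y) (t : TTerm X) : IsMinus (tmap f t) ↔ IsMinus t := by
  cases t <;> simp only [tmap_leaf, tmap_node, IsMinus]

@[simp]
theorem suppT_leaf (x : X) : suppT (leaf x) = {x} := by
  rw [suppT]

@[simp]
theorem suppT_node (i : ℕ) (l : List (TTerm X)) : suppT (node i l) = ⋃ t ∈ l, suppT t := by
  rw [suppT, List.attach_map_val]
  induction l with
  | nil => simp
  | cons t l ih => simp [ih, Set.iUnion_or, Set.iUnion_union_distrib]

theorem finite_suppT (t : TTerm X) : (suppT t).Finite := by
  induction t with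
  | leaf x => simp only [suppT_leaf, Set.finite_singleton]
  | node i l ih => exact suppT_node i l ▸ l.finite_toSet.biUnion ih

theorem suppT_tmap (f : X → Y) (t : TTerm X) : suppT (tmap f t) = f '' suppT t := by
  induction t with
  | leaf x => simp only [tmap_leaf, suppT_leaf, Set.image_singleton]
  | node i l ih =>
    simp only [tmap_node, suppT_node, List.mem_map, Set.iUnion_exists, Set.biUnion_and',
      Set.iUnion_iUnion_eq_right, Set.image_iUnion₂]
    exact Set.iUnion₂_congr ih

theorem range_tmap (f : X → Y) : Set.range (tmap f) = {t | suppT t ⊆ Set.range f} := by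
  ext t
  refine ⟨?_, fun ht => ?_⟩
  · rintro ⟨s, rfl⟩
    exact (suppT_tmap f s).trans_subset (Set.image_subset_range f (suppT s))
  · change suppT t ⊆ Set.range f at ht
    induction t with
    | leaf y =>
      obtain ⟨x, rfl⟩ : y ∈ Set.range f := by
        rwa [suppT_leaf, Set.singleton_subset_iff] at ht
      exact ⟨leaf x, tmap_leaf f x⟩
    | node i l ih =>
      rw [suppT_node, Set.iUnion₂_subset_iff] at ht
      obtain ⟨l', rfl⟩ : l ∈ Set.range (List.map (tmap f)) := by
        rw [Set.range_list_map]
        exact fun t h => ih t h (ht t h)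
      exact ⟨node i l', tmap_node f i l'⟩

section GapOrder

variable {r : X → X → Prop} {s t w : TTerm X} {x y : X} {i j : ℕ} {l l' : List (TTerm X)}

theorem tle_leaf_leaf : TLE r (leaf x) (leaf y) ↔ r x y :=
  ⟨fun | .leaf h => h, .leaf⟩

theorem tle_leaf_node : TLE r (leaf x) (node j l) ↔ ∃ t ∈ l, TLE r (leaf x) t :=
  ⟨fun | .leaf_sub ht h => ⟨_, ht, h⟩, fun ⟨_, ht, h⟩ => .leaf_sub ht h⟩

theorem not_tle_node_leaf : ¬ TLE r (node i l) (leaf y) :=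
  nofun

theorem tle_node_node : TLE r (node i l) (node j l') ↔
    i = j ∧ MultisetLE (TLE r) l l' ∨ i ≤ j ∧ ∃ t ∈ l', TLE r (node i l) t := by
  constructor
  · rintro (_ | _ | ⟨g, hg, h⟩ | ⟨hij, ht, h⟩)
    exacts [.inl ⟨rfl, g, hg, h⟩, .inr ⟨hij, _, ht, h⟩]
  · rintro (⟨rfl, g, hg, h⟩ | ⟨hij, t, ht, h⟩)
    exacts [.node g hg h, .node_sub hij ht h]

theorem le_of_tle_node_node (h : TLE r (node i l) (node j l')) : i ≤ j :=
  (tle_node_node.1 h).elim (fun h => h.1.le) And.left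

theorem TLE.mono {r' : X → X → Prop} (hr : ∀ x y, r x y → r' x y) (h : TLE r s t) :
    TLE r' s t := by
  induction h with
  | leaf h => exact .leaf (hr _ _ h)
  | leaf_sub ht _ ih => exact .leaf_sub ht ih
  | node g hg _ ih => exact .node g hg ih
  | node_sub hij ht _ ih => exact .node_sub hij ht ih

theorem tle_tmap_iff {r : Y → Y → Prop} {f : X → Y} :
    TLE r (tmap f s) (tmap f t) ↔ TLE (fun x y => r (f x) (f y)) s t := by
  induction s generalizing t with
  | leaf x =>
    induction t with
    | leaf y => simp only [tmap_leaf, tle_leaf_leaf]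
    | node j l ih =>
      rw [tmap_leaf] at ih
      simp only [tmap_leaf, tmap_node, tle_leaf_node, List.mem_map, exists_exists_and_eq_and]
      exact exists_congr fun t => and_congr_right (ih t)
  | node i k ihk =>
    induction t with
    | leaf y => simp only [tmap_leaf, tmap_node, not_tle_node_leaf]
    | node j l ihl =>
      rw [tmap_node] at ihl
      simp only [tmap_node, tle_node_node, List.mem_map, exists_exists_and_eq_and,
        MultisetLE.map_iff]
      exact or_congr (and_congr_right fun _ => MultisetLE.congr_of_mem fun s hs t _ => ihk s hs)
        (and_congr_right fun _ => exists_congr fun t => and_congr_right (ihl t))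

theorem TLE.exists_mem_suppT (h : TLE r s t) : ∀ x ∈ suppT s, ∃ y ∈ suppT t, r x y := by
  induction h with
  | leaf h => simpa only [suppT_leaf, Set.mem_singleton_iff, forall_eq, exists_eq_left] using h
  | leaf_sub ht _ ih | node_sub _ ht _ ih =>
    intro x hx
    obtain ⟨y, hy, hxy⟩ := ih x hx
    exact ⟨y, suppT_node _ _ ▸ Set.mem_biUnion ht hy, hxy⟩
  | node g _ _ ih =>
    intro x hx
    obtain ⟨s, hs, hx⟩ := Set.mem_iUnion₂.1 (suppT_node _ _ ▸ hx)
    obtain ⟨k, rfl⟩ := List.get_of_mem hs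
    obtain ⟨y, hy, hxy⟩ := ih k x hx
    exact ⟨y, suppT_node _ _ ▸ Set.mem_biUnion (List.get_mem _ _) hy, hxy⟩

theorem TLE.refl [Std.Refl r] (t : TTerm X) : TLE r t t := by
  induction t with
  | leaf x => exact .leaf (_root_.refl x)
  | node i l ih => exact .node id Function.injective_id fun k => ih _ (List.get_mem l k)

theorem TLE.trans [IsTrans X r] (hst : TLE r s t) (htw : TLE r t w) : TLE r s w := by
  induction htw generalizing s with
  | leaf hyz =>
    cases hst with
    | leaf hxy => exact .leaf (_root_.trans hxy hyz)
  | leaf_sub hu _ ih =>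
    cases hst with
    | leaf hxy => exact .leaf_sub hu (ih (.leaf hxy))
  | node g hg _ ih =>
    cases hst with
    | leaf_sub hu hsu =>
      obtain ⟨k, rfl⟩ := List.get_of_mem hu
      exact .leaf_sub (List.get_mem _ _) (ih k hsu)
    | node g' hg' h => exact .node (g ∘ g') (hg.comp hg') fun k => ih _ (h k)
    | node_sub hij hu hsu =>
      obtain ⟨k, rfl⟩ := List.get_of_mem hu
      exact .node_sub hij (List.get_mem _ _) (ih k hsu)
  | node_sub hjk hu _ ih =>
    cases s with
    | leaf x => exact .leaf_sub hu (ih hst)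
    | node i l => exact .node_sub ((le_of_tle_node_node hst).trans hjk) hu (ih hst)

instance TLE.instIsPreorder [IsPreorder X r] : IsPreorder (TTerm X) (TLE r) where
  refl := TLE.refl
  trans _ _ _ := TLE.trans

theorem height_node_le_iff {m : ℕ} : height (node i l) ≤ m ↔ ∀ t ∈ l, height t < m := by
  rw [height, List.attach_map_val]
  induction l with
  | nil => simp
  | cons t l ih => simp [ih]

theorem height_lt_of_mem (i : ℕ) (ht : t ∈ l) : height t < height (node i l) :=
  height_node_le_iff.1 le_rfl t ht

theorem TLE.height_le (h : TLE r s t) : height s ≤ height t := by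
  induction h with
  | leaf _ | leaf_sub _ _ _ => simp only [height, zero_le]
  | node g _ _ ih =>
    rw [height_node_le_iff]
    intro s hs
    obtain ⟨k, rfl⟩ := List.get_of_mem hs
    exact (ih k).trans_lt (height_lt_of_mem _ (List.get_mem _ _))
  | node_sub _ ht _ ih => exact ih.trans (height_lt_of_mem _ ht).le

theorem not_tle_of_mem (i : ℕ) (ht : t ∈ l) : ¬ TLE r (node i l) t :=
  fun h => h.height_le.not_gt (height_lt_of_mem i ht)

theorem multisetLE_of_tle_of_tle [IsTrans X r] (h : TLE r (node i l) (node j l'))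
    (h' : TLE r (node j l') (node i l)) : i = j ∧ MultisetLE (TLE r) l l' :=
  (tle_node_node.1 h).resolve_right fun ⟨_, _, ht, hlt⟩ => not_tle_of_mem j ht (h'.trans hlt)

theorem TEquiv.antisymmRel (h : TEquiv (AntisymmRel r) s t) : AntisymmRel (TLE r) s t := by
  induction h with
  | leaf h => exact ⟨.leaf h.1, .leaf h.2⟩
  | node g hg _ ih =>
    let e := Equiv.ofBijective g hg
    refine ⟨.node g hg.injective fun k => (ih k).1, .node e.symm e.symm.injective fun k => ?_⟩
    obtain ⟨k, rfl⟩ := e.surjective k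
    rw [e.symm_apply_apply]
    exact (ih k).2

theorem tequiv_of_antisymmRel [IsPreorder X r] (h : AntisymmRel (TLE r) s t) :
    TEquiv (AntisymmRel r) s t := by
  induction s generalizing t with
  | leaf x =>
    cases t with
    | leaf y => exact .leaf ⟨tle_leaf_leaf.1 h.1, tle_leaf_leaf.1 h.2⟩
    | node j l' => exact absurd h.2 not_tle_node_leaf
  | node i l ih =>
    cases t with
    | leaf y => exact absurd h.1 not_tle_node_leaf
    | node j l' =>
      obtain ⟨rfl, hll'⟩ := multisetLE_of_tle_of_tle h.1 h.2
      obtain ⟨g, hg, hlg⟩ := hll'.exists_bijective_antisymmRel (multisetLE_of_tle_of_tle h.2 h.1).2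
      exact .node g hg fun k => ih _ (List.get_mem l k) (hlg k)

theorem tequiv_eq_iff_antisymmRel [IsPartialOrder X r] :
    TEquiv Eq s t ↔ AntisymmRel (TLE r) s t := by
  have eq_antisymmRel : Eq = AntisymmRel r := by ext; exact antisymmRel_iff_eq.symm
  rw [eq_antisymmRel]
  exact ⟨TEquiv.antisymmRel, tequiv_of_antisymmRel⟩

end GapOrder

end TTerm

theorem tn_tnMinus_normal_PO_dilator_general (P : ∀ X : Type u, TTerm X → Prop)
    (hP : ∀ {X Y : Type u} (f : X → Y) (t : TTerm X), P Y (tmap f t) ↔ P X t) :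
    (∀ (X : Type u) [PartialOrder X],
      IsPartialOrder (Quot (Subrel (TEquiv Eq) (P X))) fun p q =>
        ∃ a b, p = Quot.mk _ a ∧ q = Quot.mk _ b ∧ Subrel (TLE (· ≤ ·)) (P X) a b) ∧
    (∀ (X : Type u) (t : TTerm X), tmap (id : X → X) t = t) ∧
    (∀ (X Y Z : Type u) (f : X → Y) (g : Y → Z) (t : TTerm X),
      tmap (g ∘ f) t = tmap g (tmap f t)) ∧
    (∀ (X Y : Type u) [PartialOrder X] [PartialOrder Y] (f : X → Y), QuasiEmb f →
      ∀ s t : TTerm X, TLE (· ≤ ·) (tmap f s) (tmap f t) → TLE (· ≤ ·) s t) ∧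
    (∀ (X Y : Type u) [PartialOrder X] [PartialOrder Y] (f : X → Y), IsEmb f →
      ∀ s t : TTerm X, TLE (· ≤ ·) s t ↔ TLE (· ≤ ·) (tmap f s) (tmap f t)) ∧
    (∀ (X : Type u) (t : TTerm X), (suppT t).Finite) ∧
    (∀ (X Y : Type u) (f : X → Y) (t : TTerm X), suppT (tmap f t) = f '' suppT t) ∧
    (∀ (X Y : Type u) (f : X → Y) (t : TTerm Y), P Y t → suppT t ⊆ Set.range f →
      ∃ s : TTerm X, P X s ∧ tmap f s = t) ∧
    (∀ (X : Type u) [PartialOrder X] (s t : TTerm X),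
      TLE (· ≤ ·) s t → LeFin (suppT s) (suppT t)) := by
  refine ⟨fun X _ => ?_, fun _ => tmap_id, fun _ _ _ => tmap_comp,
    fun _ _ _ _ f hf s t h => (tle_tmap_iff.1 h).mono hf, fun _ _ _ _ f hf s t => ?_,
    fun _ => finite_suppT, fun _ _ => suppT_tmap, fun X Y f t ht hsupp => ?_,
    fun _ _ _ _ h => h.exists_mem_suppT⟩
  · have : IsPreorder _ (Subrel (TLE (· ≤ ·)) (P X)) := Order.Preimage.instIsPreorder
    exact isPartialOrder_quot_of_iff_antisymmRel fun _ _ => tequiv_eq_iff_antisymmRel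
  · rw [tle_tmap_iff]
    exact ⟨.mono fun x y => (hf x y).1, .mono fun x y => (hf x y).2⟩
  · obtain ⟨s, rfl⟩ : t ∈ Set.range (tmap f) := range_tmap f ▸ hsupp
    exact ⟨s, (hP f s).1 ht, rfl⟩

/-- `T_n` and `T_{n+1}^-`, with the maps `tmap` and the supports `suppT`, are
normal PO-dilators. -/
theorem tn_tnMinus_normal_PO_dilator (n : ℕ) :
    -- `T_n(X)` and `T_{n+1}^-(X)` are partial orders
    (∀ (X : Type u) [PartialOrder X], IsPartialOrder (TnQ n X) (TnQLE n X)) ∧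
    (∀ (X : Type u) [PartialOrder X], IsPartialOrder (TnMQ (n + 1) X) (TnMQLE (n + 1) X)) ∧
    -- functoriality of `tmap`
    (∀ (X : Type u) (t : TTerm X), tmap (id : X → X) t = t) ∧
    (∀ (X Y Z : Type u) (f : X → Y) (g : Y → Z) (t : TTerm X),
        tmap (g ∘ f) t = tmap g (tmap f t)) ∧
    -- `tmap f` restricts to `T_n(X) → T_n(Y)` and to `T_{n+1}^-(X) → T_{n+1}^-(Y)`
    (∀ (X Y : Type u) (f : X → Y) (t : TTerm X), TTerm.Bdd n t → TTerm.Bdd n (tmap f t)) ∧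
    (∀ (X Y : Type u) (f : X → Y) (t : TTerm X), TTerm.IsMinus t → TTerm.IsMinus (tmap f t)) ∧
    -- `T_n` sends quasi embeddings to quasi embeddings
    (∀ (X Y : Type u) [PartialOrder X] [PartialOrder Y] (f : X → Y), QuasiEmb f →
        ∀ s t : TTerm X, TTerm.Bdd n s → TTerm.Bdd n t →
          TLE (· ≤ ·) (tmap f s) (tmap f t) → TLE (· ≤ ·) s t) ∧
    -- `T_n` sends embeddings to embeddings
    (∀ (X Y : Type u) [PartialOrder X] [PartialOrder Y] (f : X → Y), IsEmb f →
        ∀ s t : TTerm X, TTerm.Bdd n s → TTerm.Bdd n t →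
          (TLE (· ≤ ·) s t ↔ TLE (· ≤ ·) (tmap f s) (tmap f t))) ∧
    -- supports are finite
    (∀ (X : Type u) (t : TTerm X), (suppT t).Finite) ∧
    -- naturality of supports
    (∀ (X Y : Type u) (f : X → Y) (t : TTerm X), suppT (tmap f t) = f '' suppT t) ∧
    -- the support condition for `T_n`
    (∀ (X Y : Type u) [PartialOrder X] [PartialOrder Y] (f : X → Y), IsEmb f →
        ∀ t : TTerm Y, TTerm.Bdd n t → suppT t ⊆ Set.range f →
          ∃ s : TTerm X, TTerm.Bdd n s ∧ tmap f s = t) ∧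
    -- the support condition for `T_{n+1}^-`
    (∀ (X Y : Type u) [PartialOrder X] [PartialOrder Y] (f : X → Y), IsEmb f →
        ∀ t : TTerm Y, TTerm.Bdd (n + 1) t → TTerm.IsMinus t → suppT t ⊆ Set.range f →
          ∃ s : TTerm X, (TTerm.Bdd (n + 1) s ∧ TTerm.IsMinus s) ∧ tmap f s = t) ∧
    -- normality
    (∀ (X : Type u) [PartialOrder X] (s t : TTerm X), TTerm.Bdd n s → TTerm.Bdd n t →
        TLE (· ≤ ·) s t → LeFin (suppT s) (suppT t)) := by
  obtain ⟨isPartialOrder, map_id, map_comp, quasiEmb, isEmb, finite, natural, support, normal⟩ :=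
    tn_tnMinus_normal_PO_dilator_general (fun _ => Bdd n) bdd_tmap
  obtain ⟨isPartialOrder_minus, -, -, -, -, -, -, support_minus, -⟩ :=
    tn_tnMinus_normal_PO_dilator_general (fun _ t => Bdd (n + 1) t ∧ IsMinus t)
      fun f t => and_congr (bdd_tmap f t) (isMinus_tmap f t)
  exact ⟨isPartialOrder, isPartialOrder_minus, map_id, map_comp,
    fun _ _ f t => (bdd_tmap f t).2, fun _ _ f t => (isMinus_tmap f t).2,
    fun X Y _ _ f hf s t _ _ => quasiEmb X Y f hf s t,
    fun X Y _ _ f hf s t _ _ => isEmb X Y f hf s t, finite, natural,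
    fun X Y _ _ f _ => support X Y f,
    fun X Y _ _ f _ t ht hminus => support_minus X Y f t ⟨ht, hminus⟩,
    fun X _ s t _ _ => normal X s t⟩
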